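/- Let ℓ be a loss function. The multivariate shortfall risk R on M^θ is (a) convex: R(αX + (1 − α)Y) ≤ αR(X) + (1 − α)R(Y) for all X, Y ∈ M^θ and α ∈ [0, 1]; (b) monotone: if X ≤ Y P-almost surely componentwise then R(X) ≤ R(Y); and (c) translation invariant: R(X + m) = R(X) + ∑_k m_k for every m ∈ ℝ^d. -/

import Mathlib

/-!
The three properties are inherited from the acceptance sets: these satisfy
`α A(X) + (1 - α) A(Y) ⊆ A(α X + (1 - α) Y)` by convexity of `ℓ`, `A(Y) ⊆ A(X)` when `X ≤ Y`
almost surely, since `ℓ` is increasing, and `A(X + m) = A(X) + m`.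

To pass to the real-valued infimum, the set of sums `∑ₖ mₖ` with `m ∈ A(X)` must be nonempty
(`acceptSet_nonempty`, dominated convergence as the cash amounts tend to infinity) and bounded
below (`riskSet_bddBelow`, from the linear lower bound on `ℓ`). The lower bound also makes the
negative parts of the losses integrable, so that `integrable_of_eexp_lt_top` turns extended
expectations of acceptable positions into Bochner integrals; linearity of the latter yields the
convexity of acceptance.
-/

open MeasureTheory ENNReal Pointwise

/-- The positive part of an extended real number, valued in `ℝ≥0∞`. -/
noncomputable def ERealPos (e : EReal) : ℝ≥0∞ := (max e 0).abs

/-- Extended expectation of a `(-∞,∞]`-valued integrand, as an extended real. -/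
noncomputable def eexp {Ω : Type*} [MeasurableSpace Ω] (P : Measure Ω)
    (g : Ω → EReal) : EReal :=
  ((∫⁻ ω, ERealPos (g ω) ∂P) : EReal) - ((∫⁻ ω, ERealPos (-(g ω)) ∂P) : EReal)

/-- A loss function `ℓ : ℝ^d → (-∞,∞]` with constant `c` as in (A3):
(A1) increasing, (A2) convex, lower semicontinuous with `inf ℓ < 0`,
(A3) `ℓ x ≥ ∑ₖ xₖ - c`. -/
structure IsLossFunction {d : ℕ} (ℓ : (Fin d → ℝ) → EReal) (c : ℝ) : Prop where
  mono : Monotone ℓ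
  convex : ∀ x y : Fin d → ℝ, ∀ a b : ℝ, 0 ≤ a → 0 ≤ b → a + b = 1 →
    ℓ (a • x + b • y) ≤ (a : EReal) * ℓ x + (b : EReal) * ℓ y
  lsc : LowerSemicontinuous ℓ
  inf_lt_zero : (⨅ x, ℓ x) < 0
  lower_bound : ∀ x, ((∑ k, x k : ℝ) : EReal) - (c : EReal) ≤ ℓ x

/-- Membership in the Orlicz heart `M^θ` where `θ x = ℓ |x|`:
`X` is measurable and `E[θ(λX)] < ∞` for all `λ > 0`. -/
def MemOrliczHeart {Ω : Type*} [MeasurableSpace Ω] {d : ℕ}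
    (ℓ : (Fin d → ℝ) → EReal) (P : Measure Ω) (X : Ω → Fin d → ℝ) : Prop :=
  Measurable X ∧ ∀ lam : ℝ, 0 < lam → eexp P (fun ω => ℓ |lam • X ω|) < ⊤

/-- The acceptance set `A(X) = {m : E[ℓ(X - m)] ≤ 0}`. -/
def acceptSet {Ω : Type*} [MeasurableSpace Ω] {d : ℕ}
    (ℓ : (Fin d → ℝ) → EReal) (P : Measure Ω) (X : Ω → Fin d → ℝ) : Set (Fin d → ℝ) :=
  {m | eexp P (fun ω => ℓ (X ω - m)) ≤ 0}

/-- The multivariate shortfall risk `R(X) = inf {∑ₖ mₖ : m ∈ A(X)}`. -/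
noncomputable def shortfallRisk {Ω : Type*} [MeasurableSpace Ω] {d : ℕ}
    (ℓ : (Fin d → ℝ) → EReal) (P : Measure Ω) (X : Ω → Fin d → ℝ) : ℝ :=
  sInf {s : ℝ | ∃ m ∈ acceptSet ℓ P X, s = ∑ k, m k}

lemma ERealPos_eq (e : EReal) : ERealPos e = e.toENNReal := by
  induction e using EReal.rec with
  | bot => simp [ERealPos]
  | top => simp [ERealPos]
  | coe r =>
    rw [EReal.real_coe_toENNReal]
    rcases le_total 0 r with h | h
    · rw [ERealPos, max_eq_left (EReal.coe_nonneg.2 h), EReal.abs_def, abs_of_nonneg h]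
    · rw [ERealPos, max_eq_right (EReal.coe_nonpos.2 h), ENNReal.ofReal_of_nonpos h,
        EReal.abs_zero]

/-- At `±∞` the left side is `0`, by the junk value of `EReal.toReal`. -/
lemma enorm_toReal_le (e : EReal) : ‖e.toReal‖ₑ ≤ e.toENNReal + (-e).toENNReal := by
  induction e using EReal.rec with
  | bot => simp
  | top => simp
  | coe r =>
    rw [← EReal.coe_neg, EReal.toReal_coe, EReal.real_coe_toENNReal, EReal.real_coe_toENNReal,
      ← ofReal_norm, Real.norm_eq_abs]
    rcases le_total 0 r with h | h
    · rw [abs_of_nonneg h]; exact le_self_add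
    · rw [abs_of_nonpos h]; exact le_add_self

lemma eexp_eq {Ω : Type*} [MeasurableSpace Ω] (P : Measure Ω) (g : Ω → EReal) :
    eexp P g = ((∫⁻ ω, (g ω).toENNReal ∂P : ℝ≥0∞) : EReal) -
      ((∫⁻ ω, (-(g ω)).toENNReal ∂P : ℝ≥0∞) : EReal) := by
  simp only [eexp, ERealPos_eq]

lemma eexp_mono_ae {Ω : Type*} [MeasurableSpace Ω] {P : Measure Ω} {f g : Ω → EReal}
    (h : ∀ᵐ ω ∂P, f ω ≤ g ω) : eexp P f ≤ eexp P g := by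
  rw [eexp_eq, eexp_eq]
  apply EReal.sub_le_sub
  · rw [EReal.coe_ennreal_le_coe_ennreal_iff]
    exact lintegral_mono_ae (h.mono fun ω hω => EReal.toENNReal_le_toENNReal hω)
  · rw [EReal.coe_ennreal_le_coe_ennreal_iff]
    exact lintegral_mono_ae (h.mono fun ω hω =>
      EReal.toENNReal_le_toENNReal (EReal.neg_le_neg_iff.2 hω))

lemma eexp_coe {Ω : Type*} [MeasurableSpace Ω] {P : Measure Ω} {g : Ω → ℝ}
    (hg : Integrable g P) : eexp P (fun ω => (g ω : EReal)) = ((∫ ω, g ω ∂P : ℝ) : EReal) := by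
  rw [eexp_eq, integral_eq_lintegral_pos_part_sub_lintegral_neg_part hg]
  have h1 : ∫⁻ ω, ENNReal.ofReal (g ω) ∂P ≠ ⊤ := hg.lintegral_lt_top.ne
  have h2 : ∫⁻ ω, ENNReal.ofReal (-g ω) ∂P ≠ ⊤ := hg.neg.lintegral_lt_top.ne
  rw [EReal.coe_sub, EReal.coe_ennreal_toReal h1, EReal.coe_ennreal_toReal h2]
  simp [← EReal.coe_neg]

/-- An extended expectation that is `< ⊤` for an integrand with an integrable minorant is an
ordinary expectation. The minorant makes the negative part integrable, which rules out the
convention `⊤ - ⊤ = ⊥` as the reason for `eexp P f < ⊤`. -/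
lemma integrable_of_eexp_lt_top {Ω : Type*} [MeasurableSpace Ω] {P : Measure Ω} {f : Ω → EReal}
    {g : Ω → ℝ} (hf : Measurable f) (hg : Integrable g P) (hgf : ∀ ω, (g ω : EReal) ≤ f ω)
    (h : eexp P f < ⊤) :
    Integrable (fun ω => (f ω).toReal) P ∧ ∀ᵐ ω ∂P, f ω = ((f ω).toReal : EReal) := by
  have hN : ∫⁻ ω, (-(f ω)).toENNReal ∂P < ⊤ := by
    refine lt_of_le_of_lt (lintegral_mono fun ω =>
      EReal.toENNReal_le_toENNReal (EReal.neg_le_neg_iff.2 (hgf ω))) ?_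
    simpa [← EReal.coe_neg] using hg.neg.lintegral_lt_top
  have hP : ∫⁻ ω, (f ω).toENNReal ∂P < ⊤ := by
    by_contra hc
    rw [not_lt_top_iff] at hc
    rw [eexp_eq, hc] at h
    lift (∫⁻ ω, (-(f ω)).toENNReal ∂P) to NNReal using hN.ne with N
    simp at h
  have hbot : ∀ ω, f ω ≠ ⊥ := fun ω hω => by simpa [hω] using hgf ω
  refine ⟨⟨(hf.ereal_toReal).aestronglyMeasurable, ?_⟩, ?_⟩
  · refine lt_of_le_of_lt (lintegral_mono (g := fun ω => (f ω).toENNReal + (-(f ω)).toENNReal)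
      fun ω => ?_) ?_
    · exact enorm_toReal_le (f ω)
    · rw [lintegral_add_left hf.ereal_toENNReal]
      exact ENNReal.add_lt_top.2 ⟨hP, hN⟩
  · filter_upwards [ae_lt_top hf.ereal_toENNReal hP.ne] with ω hω
    rw [EReal.coe_toReal _ (hbot ω)]
    rintro h; simp [h] at hω


section

variable {Ω : Type*} [MeasurableSpace Ω] {P : Measure Ω} {d : ℕ} {ℓ : (Fin d → ℝ) → EReal} {c : ℝ}

lemma mem_acceptSet_add {X : Ω → Fin d → ℝ} {m n : Fin d → ℝ} :
    n + m ∈ acceptSet ℓ P (fun ω => X ω + m) ↔ n ∈ acceptSet ℓ P X := by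
  simp only [acceptSet, Set.mem_ofPred_eq, add_sub_add_right_eq_sub]

variable [IsProbabilityMeasure P]

lemma IsLossFunction.coe_le (hℓ : IsLossFunction ℓ c) (x : Fin d → ℝ) :
    ((∑ k, x k - c : ℝ) : EReal) ≤ ℓ x := by
  simpa only [EReal.coe_sub] using hℓ.lower_bound x

lemma MemOrliczHeart.integrable_loss (hℓ : IsLossFunction ℓ c) {X : Ω → Fin d → ℝ}
    (hX : MemOrliczHeart ℓ P X) :
    Integrable (fun ω => (ℓ |X ω|).toReal) P ∧ ∀ᵐ ω ∂P, ℓ |X ω| = ((ℓ |X ω|).toReal : EReal) := by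
  have hm : Measurable fun ω => |X ω| := by
    refine measurable_pi_lambda _ fun k => ?_
    simp only [Pi.abs_apply, ← Real.norm_eq_abs]
    exact (measurable_pi_iff.1 hX.1 k).norm
  refine integrable_of_eexp_lt_top (g := fun _ => -c) (hℓ.lsc.measurable.comp hm)
    (integrable_const _) (fun ω => ?_) (by simpa using hX.2 1 one_pos)
  refine le_trans ?_ (hℓ.coe_le _)
  rw [EReal.coe_le_coe_iff]
  have : 0 ≤ ∑ k, |X ω| k := Finset.sum_nonneg fun k _ => abs_nonneg _
  linarith

/-- By the linear lower bound, `|X k| ≤ ∑ₖ |X k| ≤ ℓ |X| + c`. -/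
lemma MemOrliczHeart.integrable_apply (hℓ : IsLossFunction ℓ c) {X : Ω → Fin d → ℝ}
    (hX : MemOrliczHeart ℓ P X) (k : Fin d) : Integrable (fun ω => X ω k) P := by
  obtain ⟨h1, h2⟩ := hX.integrable_loss hℓ
  refine (h1.add (integrable_const c)).mono'
    (measurable_pi_iff.1 hX.1 k).aestronglyMeasurable (h2.mono fun ω hω => ?_)
  have h3 := hℓ.coe_le |X ω|
  rw [hω, EReal.coe_le_coe_iff] at h3
  have h4 : |X ω| k ≤ ∑ k, |X ω| k :=
    Finset.single_le_sum (f := fun k => |X ω| k) (fun k _ => abs_nonneg _) (Finset.mem_univ k)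
  simp only [Pi.abs_apply, Pi.add_apply, Real.norm_eq_abs] at *
  linarith

/-- The constant vector with entries `n` is acceptable for large `n`: `ℓ (X - n)` is dominated by
`ℓ |X|` and is eventually below a fixed negative number. -/
lemma acceptSet_nonempty (hℓ : IsLossFunction ℓ c) {X : Ω → Fin d → ℝ}
    (hX : MemOrliczHeart ℓ P X) : (acceptSet ℓ P X).Nonempty := by
  obtain ⟨h1, h2⟩ := hX.integrable_loss hℓ
  obtain ⟨x₀, hx₀⟩ := iInf_lt_iff.1 hℓ.inf_lt_zero
  obtain ⟨b, hb, hb0⟩ := EReal.lt_iff_exists_real_btwn.1 hx₀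
  have hb0' : b < 0 := by exact_mod_cast hb0
  classical
  let S : ℕ → Set Ω := fun n => {ω | ∀ k, X ω k ≤ x₀ k + n}
  -- An integrable majorant of `ℓ (X - n)`, equal to `b` as soon as `X - n ≤ x₀`.
  let h : ℕ → Ω → ℝ := fun n => (S n).piecewise (fun _ => b) fun ω => (ℓ |X ω|).toReal
  have hmeas : ∀ n, AEStronglyMeasurable (h n) P := by
    intro n
    have hs : MeasurableSet (S n) := by
      simp only [S]
      rw [Set.ofPred_forall]
      exact MeasurableSet.iInter fun k =>
        measurableSet_le (measurable_pi_iff.1 hX.1 k) measurable_const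
    exact aestronglyMeasurable_const.piecewise hs h1.aestronglyMeasurable.restrict
  have hle : ∀ n ω, ‖h n ω‖ ≤ |b| + ‖(ℓ |X ω|).toReal‖ := by
    intro n ω
    simp only [h, Set.piecewise]
    split_ifs
    · rw [Real.norm_eq_abs]; linarith [norm_nonneg (ℓ |X ω|).toReal]
    · linarith [abs_nonneg b]
  have hbd : Integrable (fun ω => |b| + ‖(ℓ |X ω|).toReal‖) P := (integrable_const _).add h1.norm
  have hlim : ∀ ω, Filter.Tendsto (fun n => h n ω) Filter.atTop (nhds b) := by
    intro ω
    have : ∀ᶠ n : ℕ in Filter.atTop, ∀ k, X ω k ≤ x₀ k + n := by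
      rw [Filter.eventually_all]
      intro k
      filter_upwards [tendsto_natCast_atTop_atTop.eventually_ge_atTop (X ω k - x₀ k)] with n hn
      linarith
    refine tendsto_const_nhds.congr' ?_
    filter_upwards [this] with n hn
    have hmem : ω ∈ S n := hn
    simp only [h, Set.piecewise_eq_of_mem _ _ _ hmem]
  have ht := tendsto_integral_of_dominated_convergence _ hmeas hbd
    (fun n => Filter.Eventually.of_forall (hle n)) (Filter.Eventually.of_forall hlim)
  simp only [integral_const, probReal_univ, one_smul] at ht
  obtain ⟨n, hn⟩ := (ht.eventually_lt_const hb0').exists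
  refine ⟨fun _ => n, ?_⟩
  have hint : Integrable (h n) P :=
    hbd.mono' (hmeas n) (Filter.Eventually.of_forall (hle n))
  calc eexp P (fun ω => ℓ (X ω - fun _ => (n : ℝ))) ≤ eexp P (fun ω => (h n ω : EReal)) := by
        refine eexp_mono_ae (h2.mono fun ω hω => ?_)
        simp only [h, Set.piecewise]
        split_ifs with hc
        · refine (hℓ.mono fun k => ?_).trans hb.le
          simp only [Pi.sub_apply]
          have : X ω k ≤ x₀ k + n := hc k
          linarith
        · rw [← hω]
          refine hℓ.mono fun k => ?_
          simp only [Pi.sub_apply, Pi.abs_apply]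
          linarith [le_abs_self (X ω k), n.cast_nonneg (α := ℝ)]
    _ = ((∫ ω, h n ω ∂P : ℝ) : EReal) := eexp_coe hint
    _ ≤ 0 := by exact_mod_cast hn.le

lemma riskSet_nonempty (hℓ : IsLossFunction ℓ c) {X : Ω → Fin d → ℝ}
    (hX : MemOrliczHeart ℓ P X) :
    {s : ℝ | ∃ m ∈ acceptSet ℓ P X, s = ∑ k, m k}.Nonempty := by
  obtain ⟨m, hm⟩ := acceptSet_nonempty hℓ hX
  exact ⟨_, m, hm, rfl⟩

/-- The linear lower bound gives `∑ₖ mₖ ≥ E[∑ₖ Xₖ] - c` for every acceptable `m`. -/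
lemma riskSet_bddBelow (hℓ : IsLossFunction ℓ c) {X : Ω → Fin d → ℝ}
    (hX : ∀ k, Integrable (fun ω => X ω k) P) :
    BddBelow {s : ℝ | ∃ m ∈ acceptSet ℓ P X, s = ∑ k, m k} := by
  refine ⟨∫ ω, (∑ k, X ω k - c) ∂P, ?_⟩
  rintro _ ⟨m, hm, rfl⟩
  have hi : Integrable (fun ω => ∑ k, X ω k - c) P :=
    (integrable_finsetSum _ fun k _ => hX k).sub (integrable_const c)
  have h1 : eexp P (fun ω => ((∑ k, X ω k - c - ∑ k, m k : ℝ) : EReal)) ≤ 0 := by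
    refine (eexp_mono_ae (Filter.Eventually.of_forall fun ω => ?_)).trans hm
    refine le_trans (le_of_eq ?_) (hℓ.coe_le _)
    simp only [Pi.sub_apply, Finset.sum_sub_distrib]
    congr 1
    ring
  have hi' : Integrable (fun ω => ∑ k, X ω k - c - ∑ k, m k) P := hi.sub (integrable_const _)
  rw [eexp_coe hi', integral_sub hi (integrable_const _)] at h1
  simp only [integral_const, probReal_univ, one_smul] at h1
  have h2 : (∫ ω, (∑ k, X ω k - c) ∂P) - ∑ k, m k ≤ 0 := by exact_mod_cast h1
  linarith

lemma integrable_of_mem_acceptSet (hℓ : IsLossFunction ℓ c) {X : Ω → Fin d → ℝ}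
    (hX : MemOrliczHeart ℓ P X) {m : Fin d → ℝ} (hm : m ∈ acceptSet ℓ P X) :
    Integrable (fun ω => (ℓ (X ω - m)).toReal) P ∧
      (∀ᵐ ω ∂P, ℓ (X ω - m) = ((ℓ (X ω - m)).toReal : EReal)) ∧
      ∫ ω, (ℓ (X ω - m)).toReal ∂P ≤ 0 := by
  have hi : Integrable (fun ω => ∑ k, (X ω - m) k - c) P :=
    (integrable_finsetSum _ fun k _ =>
      (hX.integrable_apply hℓ k).sub (integrable_const (m k))).sub (integrable_const c)
  have hm' : eexp P (fun ω => ℓ (X ω - m)) ≤ 0 := hm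
  obtain ⟨h1, h2⟩ := integrable_of_eexp_lt_top (f := fun ω => ℓ (X ω - m))
    (hℓ.lsc.measurable.comp (hX.1.sub_const m)) hi (fun ω => hℓ.coe_le _)
    (lt_of_le_of_lt hm' EReal.zero_lt_top)
  refine ⟨h1, h2, ?_⟩
  have h3 := (eexp_mono_ae (h2.mono fun ω hω => hω.ge)).trans hm'
  rw [eexp_coe h1] at h3
  exact_mod_cast h3

lemma acceptSet_convexComb (hℓ : IsLossFunction ℓ c) {X Y : Ω → Fin d → ℝ}
    (hX : MemOrliczHeart ℓ P X) (hY : MemOrliczHeart ℓ P Y) {α β : ℝ} (hα : 0 ≤ α) (hβ : 0 ≤ β)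
    (hαβ : α + β = 1) {m n : Fin d → ℝ} (hm : m ∈ acceptSet ℓ P X) (hn : n ∈ acceptSet ℓ P Y) :
    α • m + β • n ∈ acceptSet ℓ P (fun ω => α • X ω + β • Y ω) := by
  obtain ⟨h1, h2, h3⟩ := integrable_of_mem_acceptSet hℓ hX hm
  obtain ⟨k1, k2, k3⟩ := integrable_of_mem_acceptSet hℓ hY hn
  calc eexp P (fun ω => ℓ (α • X ω + β • Y ω - (α • m + β • n)))
      ≤ eexp P (fun ω => ((α * (ℓ (X ω - m)).toReal + β * (ℓ (Y ω - n)).toReal : ℝ) : EReal)) := by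
        refine eexp_mono_ae ?_
        filter_upwards [h2, k2] with ω hω kω
        rw [add_sub_add_comm, ← smul_sub, ← smul_sub, EReal.coe_add, EReal.coe_mul, EReal.coe_mul,
          ← hω, ← kω]
        exact hℓ.convex _ _ _ _ hα hβ hαβ
    _ = ((α * ∫ ω, (ℓ (X ω - m)).toReal ∂P + β * ∫ ω, (ℓ (Y ω - n)).toReal ∂P : ℝ) : EReal) := by
        have hi : Integrable
            (fun ω => α * (ℓ (X ω - m)).toReal + β * (ℓ (Y ω - n)).toReal) P :=
          (h1.const_mul α).add (k1.const_mul β)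
        rw [eexp_coe hi, integral_add (h1.const_mul α) (k1.const_mul β), integral_const_mul, integral_const_mul]
    _ ≤ 0 := by
        rw [← EReal.coe_zero, EReal.coe_le_coe_iff]
        nlinarith

end

/-- Theorem 2.9: the multivariate shortfall risk is convex, monotone and
translation invariant on `M^θ`. -/
theorem shortfallRisk_convex_monotone_translationInvariant
    {Ω : Type*} [MeasurableSpace Ω] (P : Measure Ω) [IsProbabilityMeasure P]
    {d : ℕ} (ℓ : (Fin d → ℝ) → EReal) (c : ℝ) (hℓ : IsLossFunction ℓ c) :
    (∀ X Y : Ω → Fin d → ℝ, MemOrliczHeart ℓ P X → MemOrliczHeart ℓ P Y →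
      ∀ α : ℝ, 0 ≤ α → α ≤ 1 →
        shortfallRisk ℓ P (fun ω => α • X ω + (1 - α) • Y ω) ≤
          α * shortfallRisk ℓ P X + (1 - α) * shortfallRisk ℓ P Y) ∧
    (∀ X Y : Ω → Fin d → ℝ, MemOrliczHeart ℓ P X → MemOrliczHeart ℓ P Y →
      (∀ᵐ ω ∂P, X ω ≤ Y ω) → shortfallRisk ℓ P X ≤ shortfallRisk ℓ P Y) ∧
    (∀ X : Ω → Fin d → ℝ, MemOrliczHeart ℓ P X → ∀ m : Fin d → ℝ,
      shortfallRisk ℓ P (fun ω => X ω + m) = shortfallRisk ℓ P X + ∑ k, m k) := by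
  refine ⟨fun X Y hX hY α hα hα1 => ?_, fun X Y hX hY hXY => ?_, fun X hX m => ?_⟩
  · refine le_of_forall_pos_le_add fun ε hε => ?_
    obtain ⟨_, ⟨m, hm, rfl⟩, hs⟩ := exists_lt_of_csInf_lt (riskSet_nonempty hℓ hX)
      (lt_add_of_pos_right (shortfallRisk ℓ P X) hε)
    obtain ⟨_, ⟨n, hn, rfl⟩, ht⟩ := exists_lt_of_csInf_lt (riskSet_nonempty hℓ hY)
      (lt_add_of_pos_right (shortfallRisk ℓ P Y) hε)
    have hβ : 0 ≤ 1 - α := sub_nonneg.2 hα1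
    have hmn := acceptSet_convexComb hℓ hX hY hα hβ (by ring) hm hn
    calc shortfallRisk ℓ P (fun ω => α • X ω + (1 - α) • Y ω)
        ≤ ∑ k, (α • m + (1 - α) • n) k :=
          csInf_le (riskSet_bddBelow hℓ fun k => ((hX.integrable_apply hℓ k).const_mul α).add
            ((hY.integrable_apply hℓ k).const_mul (1 - α))) ⟨_, hmn, rfl⟩
      _ = α * ∑ k, m k + (1 - α) * ∑ k, n k := by
          simp [Finset.sum_add_distrib, Finset.mul_sum]
      _ ≤ α * (shortfallRisk ℓ P X + ε) + (1 - α) * (shortfallRisk ℓ P Y + ε) := by gcongr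
      _ = α * shortfallRisk ℓ P X + (1 - α) * shortfallRisk ℓ P Y + ε := by ring
  · refine csInf_le_csInf (riskSet_bddBelow hℓ (hX.integrable_apply hℓ))
      (riskSet_nonempty hℓ hY) ?_
    rintro _ ⟨m, hm, rfl⟩
    refine ⟨m, ?_, rfl⟩
    exact (eexp_mono_ae (hXY.mono fun ω hω => hℓ.mono (sub_le_sub_right hω m))).trans hm
  · have hset : {s : ℝ | ∃ n ∈ acceptSet ℓ P (fun ω => X ω + m), s = ∑ k, n k} =
        OrderIso.addRight (∑ k, m k) '' {s : ℝ | ∃ n ∈ acceptSet ℓ P X, s = ∑ k, n k} := by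
      ext s
      constructor
      · rintro ⟨n, hn, rfl⟩
        refine ⟨_, ⟨n - m, mem_acceptSet_add.1 ((sub_add_cancel n m).symm ▸ hn), rfl⟩, ?_⟩
        simp [Finset.sum_sub_distrib]
      · rintro ⟨_, ⟨n, hn, rfl⟩, rfl⟩
        exact ⟨n + m, mem_acceptSet_add.2 hn, by simp [Finset.sum_add_distrib]⟩
    unfold shortfallRisk
    rw [hset, ← OrderIso.map_csInf' _ (riskSet_nonempty hℓ hX)
      (riskSet_bddBelow hℓ (hX.integrable_apply hℓ))]
    rfl
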